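/- (Popov–Belevitch–Hautus test.) Let A be a complex N×N matrix and B a complex N×m matrix. The controllability matrix [B, AB, A²B, …, A^{N−1}B] has rank N if and only if for every eigenvalue λ of A the N×(N+m) matrix [A − λI, B] has rank N (equivalently, there is no nonzero left eigenvector v of A with v*B = 0). -/

import Mathlib

/-- The Kalman controllability matrix `[B, AB, A²B, …, A^{N−1}B]` of the pair `(A, B)`,
with columns indexed by `Fin N × Fin m` (the pair `(k, j)` indexing column `j` of `A^k B`). -/
noncomputable def controllabilityMatrix (N m : ℕ) (A : Matrix (Fin N) (Fin N) ℂ)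
    (B : Matrix (Fin N) (Fin m) ℂ) : Matrix (Fin N) (Fin N × Fin m) ℂ :=
  Matrix.of fun (i : Fin N) (p : Fin N × Fin m) => (A ^ (p.1 : ℕ) * B) i p.2

theorem rank_eq_iff_left_kernel {N : ℕ} {ι : Type*} [Fintype ι] (M : Matrix (Fin N) ι ℂ) :
    M.rank = N ↔ ∀ v : Fin N → ℂ, Matrix.vecMul v M = 0 → v = 0 := by
  have h1 : M.rank = N ↔ LinearIndependent ℂ M.row := by
    rw [linearIndependent_iff_card_eq_finrank_span, Matrix.rank_eq_finrank_span_row,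
      Fintype.card_fin, Set.finrank]
    exact eq_comm
  rw [h1, ← Matrix.vecMul_injective_iff]
  exact injective_iff_map_eq_zero (Matrix.vecMulLinear M)

theorem vecMul_controllability_iff {N m : ℕ} (A : Matrix (Fin N) (Fin N) ℂ)
    (B : Matrix (Fin N) (Fin m) ℂ) (v : Fin N → ℂ) :
    Matrix.vecMul v (controllabilityMatrix N m A B) = 0 ↔
      ∀ k < N, Matrix.vecMul v (A ^ k * B) = 0 := by
  constructor
  · intro h k hk
    ext j
    exact congrFun h (⟨k, hk⟩, j)
  · intro h
    ext ⟨k, j⟩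
    exact congrFun (h k k.2) j

theorem vecMul_pow_all {N m : ℕ} (A : Matrix (Fin N) (Fin N) ℂ)
    (B : Matrix (Fin N) (Fin m) ℂ) (v : Fin N → ℂ)
    (h : ∀ k < N, Matrix.vecMul v (A ^ k * B) = 0) (k : ℕ) :
    Matrix.vecMul v (A ^ k * B) = 0 := by
  rcases Nat.eq_zero_or_pos N with rfl | hN
  · rw [Subsingleton.elim v 0, Matrix.zero_vecMul]
  have hd : ((Polynomial.X ^ k : Polynomial ℂ) %ₘ A.charpoly).natDegree < N := by
    have := Polynomial.natDegree_modByMonic_lt (Polynomial.X ^ k : Polynomial ℂ)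
      A.charpoly_monic (by
        intro h1
        have := A.charpoly_natDegree_eq_dim
        rw [h1] at this
        simp at this
        omega)
    simpa [A.charpoly_natDegree_eq_dim] using this
  rw [Matrix.pow_eq_aeval_mod_charpoly, Polynomial.aeval_eq_sum_range' hd, Matrix.sum_mul,
    Matrix.vecMul_sum]
  refine Finset.sum_eq_zero fun i hi => ?_
  rw [Matrix.smul_mul, Matrix.vecMul_smul, h i (Finset.mem_range.1 hi), smul_zero]

theorem vecMul_sub_iff {N : ℕ} (A : Matrix (Fin N) (Fin N) ℂ) (lam : ℂ) (v : Fin N → ℂ) :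
    Matrix.vecMul v (A - lam • 1) = 0 ↔ Matrix.vecMul v A = lam • v := by
  rw [Matrix.vecMul_sub, Matrix.vecMul_smul, Matrix.vecMul_one, sub_eq_zero]

theorem vecMul_fromCols_iff {N m : ℕ} (A : Matrix (Fin N) (Fin N) ℂ)
    (B : Matrix (Fin N) (Fin m) ℂ) (lam : ℂ) (v : Fin N → ℂ) :
    Matrix.vecMul v (Matrix.fromCols (A - lam • 1) B) = 0 ↔
      Matrix.vecMul v A = lam • v ∧ Matrix.vecMul v B = 0 := by
  rw [Matrix.vecMul_fromCols, ← vecMul_sub_iff]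
  constructor
  · intro h
    exact ⟨funext fun i => congrFun h (Sum.inl i), funext fun i => congrFun h (Sum.inr i)⟩
  · rintro ⟨h1, h2⟩
    rw [h1, h2]
    ext (i | i) <;> rfl

/-- **Popov–Belevitch–Hautus test.** The controllability matrix
`[B, AB, A²B, …, A^{N−1}B]` has rank `N` if and only if for every eigenvalue `λ` of `A`
(i.e. every `λ` with `det (A − λI) = 0`) the horizontally concatenated `N × (N+m)` matrix
`[A − λI, B]` has rank `N`. -/
theorem pbh_test (N m : ℕ) (A : Matrix (Fin N) (Fin N) ℂ) (B : Matrix (Fin N) (Fin m) ℂ) :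
    (controllabilityMatrix N m A B).rank = N ↔
      ∀ lam : ℂ, (A - lam • 1).det = 0 →
        (Matrix.fromCols (A - lam • 1) B).rank = N := by
  rw [rank_eq_iff_left_kernel]
  simp only [rank_eq_iff_left_kernel, vecMul_controllability_iff, vecMul_fromCols_iff]
  constructor
  · rintro h lam - v ⟨hA, hB⟩
    refine h v fun k _ => ?_
    have hk : Matrix.vecMul v (A ^ k) = lam ^ k • v := by
      induction k with
      | zero => simp
      | succ k ih =>
        rw [pow_succ, ← Matrix.vecMul_vecMul, ih (by omega), Matrix.smul_vecMul, hA, smul_smul,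
          pow_succ]
    rw [← Matrix.vecMul_vecMul, hk, Matrix.smul_vecMul, hB, smul_zero]
  · intro h v hv
    by_contra hv0
    let W : Submodule ℂ (Fin N → ℂ) :=
      ⨅ k : ℕ, LinearMap.ker (Matrix.vecMulLinear (A ^ k * B))
    have memW : ∀ w, w ∈ W ↔ ∀ k : ℕ, Matrix.vecMul w (A ^ k * B) = 0 := by
      intro w
      simp [W, Submodule.mem_iInf, LinearMap.mem_ker]
    have hinv : ∀ w ∈ W, Matrix.vecMulLinear A w ∈ W := by
      intro w hw
      rw [memW] at hw ⊢
      intro k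
      rw [Matrix.vecMulLinear_apply, Matrix.vecMul_vecMul, ← Matrix.mul_assoc, ← pow_succ']
      exact hw (k + 1)
    have hvW : v ∈ W := (memW v).2 (vecMul_pow_all A B v hv)
    haveI : Nontrivial W := ⟨⟨v, hvW⟩, 0, fun hh => hv0 (congrArg Subtype.val hh)⟩
    obtain ⟨lam, hlam⟩ := Module.End.exists_eigenvalue ((Matrix.vecMulLinear A).restrict hinv)
    obtain ⟨w, hw⟩ := hlam.exists_hasEigenvector
    have hwA : Matrix.vecMul (w : Fin N → ℂ) A = lam • (w : Fin N → ℂ) :=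
      congrArg Subtype.val hw.apply_eq_smul
    have hw0 : (w : Fin N → ℂ) ≠ 0 := fun hh => hw.2 (Subtype.ext hh)
    have hwB : Matrix.vecMul (w : Fin N → ℂ) B = 0 := by
      simpa using (memW _).1 w.2 0
    refine hw0 (h lam ?_ _ ⟨hwA, hwB⟩)
    exact Matrix.exists_vecMul_eq_zero_iff.1 ⟨_, hw0, (vecMul_sub_iff A lam _).2 hwA⟩
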